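/- arXiv:2403.10268 — 3 statements merged into one kernel-verified Lean document; each statement's English description precedes it below -/
import Mathlib

section
/- Let U ∈ M_{2ⁿ}(ℂ) be a unitary that normalizes the Pauli group. Then for each b ∈ 𝔽₂ⁿ×𝔽₂ⁿ there exist a unique sign ε_U(b) ∈ {1,−1} and a unique M_U(b) ∈ 𝔽₂ⁿ×𝔽₂ⁿ such that U σ(b) U† = ε_U(b)·σ(M_U(b)); moreover the map M_U : 𝔽₂ⁿ×𝔽₂ⁿ → 𝔽₂ⁿ×𝔽₂ⁿ is 𝔽₂-linear and bijective. -/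
/-! Each `σ(b)` is the tensor product of the single-site matrices `site x z = i^{xz} X^x Z^z`, that
is, of `I₂`, `X`, `Y`, `Z`; hence `P_n` is exactly the range of `σ`. Computing site by site,
`σ(a) σ(b)` is a nonzero multiple of `σ(a + b)`, `σ(a)² = 1`, and `σ(a)` is traceless for `a ≠ 0`.
The trace therefore separates the `σ(b)`: an equality `η σ(a) = η' σ(b)` with `η ≠ 0` forces
`a = b` and `η = η'` (`smul_pauliSigma_inj`). This gives uniqueness.

Conjugation by `U` is multiplicative. Squaring `U σ(b) U† = η σ(b')` yields `η² = 1`, so `η` is a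
sign; conjugating `σ(a) σ(b) ∝ σ(a + b)` and using uniqueness yields additivity of `M_U`, which is
linearity over `𝔽₂`; and `M_U` is injective because conjugation is, hence bijective by finiteness. -/

open Matrix
open scoped Matrix

noncomputable section

/-- The Pauli matrix `X`. -/
def PX : Matrix (Fin 2) (Fin 2) ℂ := !![0, 1; 1, 0]

/-- The Pauli matrix `Z`. -/
def PZ : Matrix (Fin 2) (Fin 2) ℂ := !![1, 0; 0, -1]

/-- The Pauli matrix `Y = i X Z`. -/
def PY : Matrix (Fin 2) (Fin 2) ℂ := Complex.I • (PX * PZ)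

/-- The single-qubit matrix `X^x Z^z`, exponents via the lift `𝔽₂ → {0,1} ⊆ ℕ`. -/
def XZ (x z : ZMod 2) : Matrix (Fin 2) (Fin 2) ℂ := PX ^ x.val * PZ ^ z.val

/-- The `n`-fold Kronecker (tensor) product of 2×2 matrices, realised on the
index type `Fin n → Fin 2` (so that the `(i,j)` entry is the product of the
single-site entries). -/
def tensorFun {n : ℕ} (f : Fin n → Matrix (Fin 2) (Fin 2) ℂ) :
    Matrix (Fin n → Fin 2) (Fin n → Fin 2) ℂ :=
  Matrix.of fun i j => ∏ q, f q (i q) (j q)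

/-- Hamming weight of a vector over `𝔽₂`. -/
def hamWt {n : ℕ} (v : Fin n → ZMod 2) : ℕ :=
  (Finset.univ.filter fun q => v q ≠ 0).card

/-- The map `σ(x,z) = i^{|x⊙z|} (X^{x₁}Z^{z₁}) ⊗ ⋯ ⊗ (X^{x_n}Z^{z_n})`. -/
def pauliSigma {n : ℕ} (b : (Fin n → ZMod 2) × (Fin n → ZMod 2)) :
    Matrix (Fin n → Fin 2) (Fin n → Fin 2) ℂ :=
  Complex.I ^ hamWt (fun q => b.1 q * b.2 q) • tensorFun fun q => XZ (b.1 q) (b.2 q)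

/-- `P_n`: the set of `n`-fold Kronecker products of matrices from `{I₂, X, Y, Z}`. -/
def PauliSet (n : ℕ) : Set (Matrix (Fin n → Fin 2) (Fin n → Fin 2) ℂ) :=
  { M | ∃ f : Fin n → Matrix (Fin 2) (Fin 2) ℂ,
      (∀ q, f q = 1 ∨ f q = PX ∨ f q = PY ∨ f q = PZ) ∧ M = tensorFun f }

/-- The single-site Hermitian Pauli matrix `i^{xz} X^x Z^z`, which is one of `I₂, X, Y, Z`. -/
def site (x z : ZMod 2) : Matrix (Fin 2) (Fin 2) ℂ :=
  (if x * z ≠ 0 then Complex.I else 1) • XZ x z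

lemma tensorFun_smul {n : ℕ} (c : Fin n → ℂ) (f : Fin n → Matrix (Fin 2) (Fin 2) ℂ) :
    tensorFun (fun q => c q • f q) = (∏ q, c q) • tensorFun f := by
  ext i j
  simp [tensorFun, Finset.prod_mul_distrib]

lemma tensorFun_mul {n : ℕ} (f g : Fin n → Matrix (Fin 2) (Fin 2) ℂ) :
    tensorFun f * tensorFun g = tensorFun (fun q => f q * g q) := by
  ext i j
  simp only [tensorFun, Matrix.mul_apply, Matrix.of_apply]
  rw [Finset.prod_univ_sum, Fintype.piFinset_univ]
  simp [Finset.prod_mul_distrib]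

lemma tensorFun_one {n : ℕ} :
    tensorFun (fun _ : Fin n => (1 : Matrix (Fin 2) (Fin 2) ℂ)) = 1 := by
  ext i j
  simp only [tensorFun, Matrix.of_apply, Matrix.one_apply]
  by_cases h : i = j
  · simp [h]
  · obtain ⟨q, hq⟩ := Function.ne_iff.mp h
    rw [if_neg h]
    exact Finset.prod_eq_zero (Finset.mem_univ q) (if_neg hq)

lemma trace_tensorFun {n : ℕ} (f : Fin n → Matrix (Fin 2) (Fin 2) ℂ) :
    (tensorFun f).trace = ∏ q, (f q).trace := by
  simp only [tensorFun, Matrix.trace, Matrix.diag, Matrix.of_apply]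
  rw [Finset.prod_univ_sum, Fintype.piFinset_univ]

lemma pauliSigma_eq {n : ℕ} (b : (Fin n → ZMod 2) × (Fin n → ZMod 2)) :
    pauliSigma b = tensorFun fun q => site (b.1 q) (b.2 q) := by
  unfold site
  rw [tensorFun_smul, pauliSigma, hamWt, Finset.prod_ite]
  simp

lemma zmod_two_cases (x : ZMod 2) : x = 0 ∨ x = 1 := by
  revert x; decide

lemma site_zero_zero : site 0 0 = 1 := by simp [site, XZ]

lemma site_one_zero : site 1 0 = PX := by simp [site, XZ, ZMod.val_one]

lemma site_zero_one : site 0 1 = PZ := by simp [site, XZ, ZMod.val_one]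

lemma site_one_one : site 1 1 = PY := by simp [site, XZ, PY, ZMod.val_one]

lemma site_mul (x z x' z' : ZMod 2) :
    ∃ c : ℂ, c ≠ 0 ∧ site x z * site x' z' = c • site (x + x') (z + z') := by
  have h2 : (1 + 1 : ZMod 2) = 0 := by decide
  -- The phase of a product of two single-qubit Pauli matrices is always one of `1`, `i`, `-i`.
  have key : ∃ c ∈ ({1, Complex.I, -Complex.I} : Set ℂ),
      site x z * site x' z' = c • site (x + x') (z + z') := by
    simp only [Set.mem_insert_iff, Set.mem_singleton_iff, exists_eq_or_imp, exists_eq_left]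
    rcases zmod_two_cases x with rfl | rfl <;> rcases zmod_two_cases z with rfl | rfl <;>
    rcases zmod_two_cases x' with rfl | rfl <;> rcases zmod_two_cases z' with rfl | rfl <;>
    simp only [h2, add_zero, zero_add, site_zero_zero, site_one_zero, site_zero_one,
      site_one_one] <;>
    simp [PX, PY, PZ, Matrix.one_fin_two]
  obtain ⟨c, hc, h⟩ := key
  refine ⟨c, ?_, h⟩
  rcases hc with rfl | rfl | rfl <;> simp

lemma site_mul_self (x z : ZMod 2) : site x z * site x z = 1 := by
  rcases zmod_two_cases x with rfl | rfl <;> rcases zmod_two_cases z with rfl | rfl <;>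
  simp only [site_zero_zero, site_one_zero, site_zero_one, site_one_one] <;>
  simp [PX, PY, PZ, Matrix.one_fin_two]

lemma trace_site (x z : ZMod 2) (h : x ≠ 0 ∨ z ≠ 0) : (site x z).trace = 0 := by
  rcases zmod_two_cases x with rfl | rfl <;> rcases zmod_two_cases z with rfl | rfl <;>
  simp only [site_zero_zero, site_one_zero, site_zero_one, site_one_one] <;>
  simp [PX, PY, PZ, Matrix.trace_fin_two] at h ⊢

lemma pauliSigma_mul {n : ℕ} (a b : (Fin n → ZMod 2) × (Fin n → ZMod 2)) :
    ∃ c : ℂ, c ≠ 0 ∧ pauliSigma a * pauliSigma b = c • pauliSigma (a + b) := by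
  choose c hc h using fun q => site_mul (a.1 q) (a.2 q) (b.1 q) (b.2 q)
  refine ⟨∏ q, c q, Finset.prod_ne_zero_iff.mpr fun q _ => hc q, ?_⟩
  simp only [pauliSigma_eq, tensorFun_mul, h, tensorFun_smul]
  rfl

lemma pauliSigma_mul_self {n : ℕ} (a : (Fin n → ZMod 2) × (Fin n → ZMod 2)) :
    pauliSigma a * pauliSigma a = 1 := by
  simp only [pauliSigma_eq, tensorFun_mul, site_mul_self, tensorFun_one]

lemma trace_pauliSigma {n : ℕ} (a : (Fin n → ZMod 2) × (Fin n → ZMod 2)) (ha : a ≠ 0) :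
    (pauliSigma a).trace = 0 := by
  rw [pauliSigma_eq, trace_tensorFun]
  have : ∃ q, a.1 q ≠ 0 ∨ a.2 q ≠ 0 := by
    by_contra! h
    exact ha (Prod.ext (funext fun q => (h q).1) (funext fun q => (h q).2))
  obtain ⟨q, hq⟩ := this
  exact Finset.prod_eq_zero (Finset.mem_univ q) (trace_site _ _ hq)

/-- The matrices `σ(b)` are pairwise non-proportional and nonzero. -/
lemma smul_pauliSigma_inj {n : ℕ} {a b : (Fin n → ZMod 2) × (Fin n → ZMod 2)} {η η' : ℂ}
    (hη : η ≠ 0) (h : η • pauliSigma a = η' • pauliSigma b) : a = b ∧ η = η' := by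
  have hab : a = b := by
    by_contra hab
    obtain ⟨c, -, hc⟩ := pauliSigma_mul b a
    have h1 := congrArg (fun A => (A * pauliSigma a).trace) h
    have hne : b + a ≠ 0 := by
      intro h0
      apply hab
      -- In characteristic two, `b + a = 0` means `b = a`.
      have ha : a + a = 0 := by
        ext q <;> exact CharTwo.add_self_eq_zero _
      exact (add_right_cancel (h0.trans ha.symm)).symm
    simp [pauliSigma_mul_self, hc, trace_pauliSigma _ hne, hη] at h1
  subst hab
  refine ⟨rfl, ?_⟩
  have h1 := congrArg (fun A => (A * pauliSigma a)) h
  simp only [smul_mul_assoc, pauliSigma_mul_self] at h1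
  have h2 := congrFun (congrFun h1 0) 0
  simpa using h2

lemma pauliSigma_mem {n : ℕ} (b : (Fin n → ZMod 2) × (Fin n → ZMod 2)) :
    pauliSigma b ∈ PauliSet n := by
  refine ⟨_, fun q => ?_, pauliSigma_eq b⟩
  rcases zmod_two_cases (b.1 q) with h | h <;> rcases zmod_two_cases (b.2 q) with h' | h' <;>
  simp [h, h', site_zero_zero, site_one_zero, site_zero_one, site_one_one]

lemma exists_pauliSigma {n : ℕ} {P : Matrix (Fin n → Fin 2) (Fin n → Fin 2) ℂ}
    (hP : P ∈ PauliSet n) : ∃ b, P = pauliSigma b := by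
  obtain ⟨f, hf, rfl⟩ := hP
  have : ∀ q, ∃ p : ZMod 2 × ZMod 2, f q = site p.1 p.2 := by
    intro q
    rcases hf q with h | h | h | h
    · exact ⟨(0, 0), h.trans site_zero_zero.symm⟩
    · exact ⟨(1, 0), h.trans site_one_zero.symm⟩
    · exact ⟨(1, 1), h.trans site_one_one.symm⟩
    · exact ⟨(0, 1), h.trans site_zero_one.symm⟩
  choose p hp using this
  refine ⟨(fun q => (p q).1, fun q => (p q).2), ?_⟩
  rw [pauliSigma_eq, funext hp]

/-- if a unitary `U` normalizes the Pauli group, then for each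
`b ∈ 𝔽₂ⁿ×𝔽₂ⁿ` there exist a unique sign `ε ∈ {1,−1}` and a unique
`M_U(b) ∈ 𝔽₂ⁿ×𝔽₂ⁿ` with `U σ(b) U† = ε·σ(M_U(b))`; moreover the resulting map
`M_U` is `𝔽₂`-linear and bijective. -/
theorem clifford_induces_linear_bijection (n : ℕ)
    (U : Matrix (Fin n → Fin 2) (Fin n → Fin 2) ℂ)
    (hU : U ∈ Matrix.unitaryGroup (Fin n → Fin 2) ℂ)
    (hnorm : ∀ P ∈ PauliSet n, ∃ η ∈ ({1, -1, Complex.I, -Complex.I} : Set ℂ),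
      ∃ P' ∈ PauliSet n, U * P * Uᴴ = η • P') :
    (∀ b : (Fin n → ZMod 2) × (Fin n → ZMod 2),
      ∃! p : ℂ × ((Fin n → ZMod 2) × (Fin n → ZMod 2)),
        p.1 ∈ ({1, -1} : Set ℂ) ∧ U * pauliSigma b * Uᴴ = p.1 • pauliSigma p.2) ∧
    ∃ M : ((Fin n → ZMod 2) × (Fin n → ZMod 2)) ≃ₗ[ZMod 2]
        ((Fin n → ZMod 2) × (Fin n → ZMod 2)),
      ∀ b, ∃ ε ∈ ({1, -1} : Set ℂ), U * pauliSigma b * Uᴴ = ε • pauliSigma (M b) := by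
  have hUU : Uᴴ * U = 1 := Matrix.mem_unitaryGroup_iff'.mp hU
  have hUU' : U * Uᴴ = 1 := Matrix.mem_unitaryGroup_iff.mp hU
  have conj_mul : ∀ A B : Matrix (Fin n → Fin 2) (Fin n → Fin 2) ℂ,
      U * (A * B) * Uᴴ = (U * A * Uᴴ) * (U * B * Uᴴ) := by
    intro A B
    calc U * (A * B) * Uᴴ = U * A * 1 * B * Uᴴ := by simp only [mul_one, mul_assoc]
      _ = _ := by rw [← hUU]; simp only [mul_assoc]
  have conj_inj : ∀ A B : Matrix (Fin n → Fin 2) (Fin n → Fin 2) ℂ,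
      U * A * Uᴴ = U * B * Uᴴ → A = B := by
    have undo : ∀ A : Matrix (Fin n → Fin 2) (Fin n → Fin 2) ℂ, Uᴴ * (U * A * Uᴴ) * U = A := by
      intro A
      calc Uᴴ * (U * A * Uᴴ) * U = (Uᴴ * U) * A * (Uᴴ * U) := by simp only [mul_assoc]
        _ = A := by rw [hUU, one_mul, mul_one]
    intro A B h
    rw [← undo A, h, undo]
  have sign_ne : ∀ ε ∈ ({1, -1} : Set ℂ), ε ≠ 0 := by
    rintro ε (rfl | rfl) <;> simp
  have ex : ∀ b : (Fin n → ZMod 2) × (Fin n → ZMod 2),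
      ∃ b' : (Fin n → ZMod 2) × (Fin n → ZMod 2), ∃ ε ∈ ({1, -1} : Set ℂ),
        U * pauliSigma b * Uᴴ = ε • pauliSigma b' := by
    intro b
    obtain ⟨η, -, P', hP', h⟩ := hnorm _ (pauliSigma_mem b)
    obtain ⟨b', rfl⟩ := exists_pauliSigma hP'
    refine ⟨b', η, ?_, h⟩
    have h1 := conj_mul (pauliSigma b) (pauliSigma b)
    rw [h, smul_mul_smul_comm, pauliSigma_mul_self, pauliSigma_mul_self, mul_one, hUU'] at h1
    have h2 : 1 = η * η := by simpa using congrFun (congrFun h1 0) 0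
    exact mul_self_eq_one_iff.mp h2.symm
  choose M ε hε hM using ex
  refine ⟨fun b => ⟨(ε b, M b), ⟨hε b, hM b⟩, ?_⟩, ?_⟩
  · rintro ⟨ε', b'⟩ ⟨hs, h⟩
    obtain ⟨h1, h2⟩ := smul_pauliSigma_inj (sign_ne _ hs) (h.symm.trans (hM b))
    exact Prod.ext h2 h1
  have map_add' : ∀ a b, M (a + b) = M a + M b := by
    intro a b
    obtain ⟨c, hc, h⟩ := pauliSigma_mul a b
    obtain ⟨c', -, h'⟩ := pauliSigma_mul (M a) (M b)
    have h1 := conj_mul (pauliSigma a) (pauliSigma b)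
    rw [h, hM a, hM b, smul_mul_smul_comm, h', mul_smul_comm, smul_mul_assoc, hM (a + b),
      smul_smul, smul_smul] at h1
    exact (smul_pauliSigma_inj (mul_ne_zero hc (sign_ne _ (hε _))) h1).1
  have inj : Function.Injective M := by
    intro a b hab
    have h : U * (ε b • pauliSigma a) * Uᴴ = U * (ε a • pauliSigma b) * Uᴴ := by
      rw [mul_smul_comm, smul_mul_assoc, mul_smul_comm, smul_mul_assoc, hM a, hM b, hab,
        smul_smul, smul_smul, mul_comm]
    exact (smul_pauliSigma_inj (sign_ne _ (hε _)) (conj_inj _ _ h)).1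
  exact ⟨LinearEquiv.ofInjectiveEndo
    ((AddMonoidHom.mk' M map_add').toZModLinearMap 2) inj, fun b => ⟨ε b, hε b, hM b⟩⟩

end
end

section
/- Bit splitting preserves the code: let A ∈ 𝔽₂^{m×n}, let v be a column index, and let N₁, N₂ be disjoint subsets of row indices with N₁ ∪ N₂ = {a : A_{a,v} = 1}. Define A' ∈ 𝔽₂^{(m+1)×(n+1)} by: A'_{a,u} = A_{a,u} for a ≤ m and u ≤ n with u ≠ v; A'_{a,v} = A_{a,v} if a ∈ N₁ and 0 otherwise (a ≤ m); A'_{a,n+1} = A_{a,v} if a ∈ N₂ and 0 otherwise (a ≤ m); and the new row m+1 has A'_{m+1,v} = A'_{m+1,n+1} = 1 and zeros elsewhere. Then the linear map φ(c) = (c, c_v) (appending the v-th coordinate) is an 𝔽₂-linear bijection from ker A = {c : A cᵀ = 0} onto ker A' = {c' : A' c'ᵀ = 0}. -/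
/-!
The new check of `A'` reads `c'_v + c'_{n+1} = 0`, so over `𝔽₂` it holds exactly when the
appended bit equals bit `v` (`bitSplit_mulVec_inr`); that is, when `c' = φ(c)` for some `c`.
On such words the two halves of the split column are multiplied by the same bit, and since they
add up to the original column `v` (`split_entry_add`), each old check of `A'` evaluates on
`φ(c)` to the corresponding check of `A` on `c` (`bitSplit_mulVec_inl`). Hence `φ` maps `ker A`
onto `ker A'`; it is injective because `c` is a restriction of `φ(c)`.
-/

open Matrix
open scoped Matrix

/-- The check matrix `A'` obtained from `A` by bit splitting at column `v`
with neighbourhood subsets `N₁, N₂`.  The new column (index `Sum.inr ()`) and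
new row (index `Sum.inr ()`) implement the added bit `v'` and check `a`. -/
def bitSplit {m n : ℕ} (A : Matrix (Fin m) (Fin n) (ZMod 2)) (v : Fin n)
    (N₁ N₂ : Finset (Fin m)) : Matrix (Fin m ⊕ Unit) (Fin n ⊕ Unit) (ZMod 2) :=
  Matrix.of fun a u =>
    match a, u with
    | Sum.inl a, Sum.inl u => if u = v then (if a ∈ N₁ then A a v else 0) else A a u
    | Sum.inl a, Sum.inr _ => if a ∈ N₂ then A a v else 0
    | Sum.inr _, Sum.inl u => if u = v then 1 else 0
    | Sum.inr _, Sum.inr _ => 1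

/-- The entries `A a v` moved to the two halves of the split column add up to `A a v`: each row
with `A a v = 1` lies in exactly one of `N₁`, `N₂`, and all other rows have `A a v = 0`. -/
lemma split_entry_add {m n : ℕ} (A : Matrix (Fin m) (Fin n) (ZMod 2)) (v : Fin n)
    (N₁ N₂ : Finset (Fin m)) (hdisj : Disjoint N₁ N₂)
    (hcover : N₁ ∪ N₂ = Finset.univ.filter fun a => A a v = 1) (a : Fin m) :
    (if a ∈ N₁ then A a v else 0) + (if a ∈ N₂ then A a v else 0) = A a v := by
  have h : a ∈ N₁ ∨ a ∈ N₂ ↔ A a v = 1 := by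
    rw [← Finset.mem_union, hcover]
    simp
  by_cases h1 : a ∈ N₁
  · simp [h1, Finset.disjoint_left.mp hdisj h1]
  · by_cases h2 : a ∈ N₂
    · simp [h1, h2]
    · have h01 : ∀ x : ZMod 2, x ≠ 1 → x = 0 := by decide
      have h0 : A a v = 0 := h01 _ fun h' => (h.mpr h').elim h1 h2
      simp [h0]

lemma bitSplit_mulVec_inr {m n : ℕ} (A : Matrix (Fin m) (Fin n) (ZMod 2)) (v : Fin n)
    (N₁ N₂ : Finset (Fin m)) (c' : Fin n ⊕ Unit → ZMod 2) :
    (bitSplit A v N₁ N₂).mulVec c' (Sum.inr ()) = c' (Sum.inl v) + c' (Sum.inr ()) := by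
  simp [Matrix.mulVec, dotProduct, bitSplit]

/-- On a word whose two split bits agree, every old check of `A'` takes the same value as the
corresponding check of `A`. -/
lemma bitSplit_mulVec_inl {m n : ℕ} (A : Matrix (Fin m) (Fin n) (ZMod 2)) (v : Fin n)
    (N₁ N₂ : Finset (Fin m)) (hdisj : Disjoint N₁ N₂)
    (hcover : N₁ ∪ N₂ = Finset.univ.filter fun a => A a v = 1)
    (c : Fin n → ZMod 2) (a : Fin m) :
    (bitSplit A v N₁ N₂).mulVec (Sum.elim c fun _ => c v) (Sum.inl a) = A.mulVec c a := by
  have key := split_entry_add A v N₁ N₂ hdisj hcover a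
  simp only [Matrix.mulVec, dotProduct, bitSplit, Matrix.of_apply, Fintype.sum_sum_type,
    Sum.elim_inl, Sum.elim_inr, Finset.univ_unique, Finset.sum_singleton]
  rw [← Finset.add_sum_erase _ _ (Finset.mem_univ v),
    ← Finset.add_sum_erase _ (fun u => A a u * c u) (Finset.mem_univ v)]
  have hrest : ∑ u ∈ Finset.univ.erase v,
      (if u = v then (if a ∈ N₁ then A a v else 0) else A a u) * c u
      = ∑ u ∈ Finset.univ.erase v, A a u * c u :=
    Finset.sum_congr rfl fun u hu => by rw [if_neg (Finset.ne_of_mem_erase hu)]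
  rw [hrest, if_pos rfl]
  linear_combination c v * key

/-- bit splitting preserves the code: the map
`φ(c) = (c, c_v)` (appending the `v`-th coordinate) is an `𝔽₂`-linear bijection
from `ker A` onto `ker A'`. -/
theorem bit_splitting_preserves_code (m n : ℕ)
    (A : Matrix (Fin m) (Fin n) (ZMod 2)) (v : Fin n) (N₁ N₂ : Finset (Fin m))
    (hdisj : Disjoint N₁ N₂)
    (hcover : N₁ ∪ N₂ = Finset.univ.filter fun a => A a v = 1) :
    IsLinearMap (ZMod 2)
      (fun c : Fin n → ZMod 2 => (Sum.elim c fun _ => c v : Fin n ⊕ Unit → ZMod 2)) ∧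
    Set.BijOn (fun c : Fin n → ZMod 2 => (Sum.elim c fun _ => c v : Fin n ⊕ Unit → ZMod 2))
      {c | A.mulVec c = 0} {c' | (bitSplit A v N₁ N₂).mulVec c' = 0} := by
  refine ⟨⟨fun x y => ?_, fun r x => ?_⟩, fun c hc => ?_, fun x _ y _ hxy => ?_, fun c' hc' => ?_⟩
  · ext (u | u) <;> simp
  · ext (u | u) <;> simp
  · ext (a | a)
    · exact (bitSplit_mulVec_inl A v N₁ N₂ hdisj hcover c a).trans (congrFun hc a)
    · exact (bitSplit_mulVec_inr A v N₁ N₂ _).trans (CharTwo.add_self_eq_zero (c v))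
  · funext u
    exact congrFun hxy (Sum.inl u)
  · -- The new check says that the last bit of `c'` repeats bit `v`, so `c' = φ(c)` for its
    -- restriction `c` to the old bits.
    have hlast : c' (Sum.inl v) = c' (Sum.inr ()) := by
      rw [← CharTwo.add_eq_zero, ← bitSplit_mulVec_inr A v N₁ N₂ c']
      exact congrFun hc' (Sum.inr ())
    have hφ : (Sum.elim (fun u => c' (Sum.inl u)) fun _ => c' (Sum.inl v)) = c' := by
      ext (u | u)
      · rfl
      · exact hlast
    refine ⟨fun u => c' (Sum.inl u), ?_, hφ⟩
    ext a
    rw [← bitSplit_mulVec_inl A v N₁ N₂ hdisj hcover (fun u => c' (Sum.inl u)) a, hφ]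
    exact congrFun hc' (Sum.inl a)
end

section
/- Let N ≥ 1, let Q be a subset of {1,…,N} and R ⊆ Q. Let S ∈ M_{2ᴺ}(ℂ) satisfy S Z_q = Z_q S for every q ∈ Q. For each μ : Q → {1,−1} set E_μ = ∏_{q∈Q} (I + μ(q) Z_q)/2. Then for every ρ ∈ M_{2ᴺ}(ℂ): Σ_{μ : Q→{1,−1}} (∏_{q∈R} μ(q)) · Tr(S E_μ ρ E_μ) = Tr(S · (∏_{q∈R} Z_q) · ρ). -/
/-!
All the matrices `Z_q` are diagonal in the computational basis, hence so are `E_μ` and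
`∏_{q∈R} Z_q`. As `S` commutes with `E_μ`, cyclicity of the trace gives
`Tr(S E_μ ρ E_μ) = Tr(S E_μ² ρ)`, and by linearity the claim follows from the matrix identity
`Σ_μ (∏_{q∈R} μ(q)) E_μ² = ∏_{q∈R} Z_q` (`sum_sign_smul_Eproj_sq`). On diagonal entries the
sum over `μ` factors over `q ∈ Q`: with `z = ±1` the eigenvalue of `Z_q`, the factor at `q` is
`((1+z)/2)² - ((1-z)/2)² = z` for `q ∈ R` and `((1+z)/2)² + ((1-z)/2)² = 1` otherwise.
-/

open Matrix
open scoped Matrix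

noncomputable section

/-- `Z_q = I₂^{⊗(q−1)} ⊗ Z ⊗ I₂^{⊗(N−q)}`, realised on the index type
`Fin N → Fin 2`. -/
def Zq (N : ℕ) (q : Fin N) : Matrix (Fin N → Fin 2) (Fin N → Fin 2) ℂ :=
  tensorFun fun p => if p = q then PZ else 1

/-- A Boolean encoding of a sign in `{1, −1}`. -/
def sgn (b : Bool) : ℂ := if b then 1 else -1

/-- The measurement projector `E_μ = ∏_{q∈Q} (I + μ(q) Z_q)/2` for a
measurement-outcome assignment `μ : Q → {1,−1}` (encoded by a Boolean
function on `Q`).  Since the factors commute, the product is taken in the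
canonical order provided by `Finset.toList`. -/
noncomputable def Eproj (N : ℕ) (Q : Finset (Fin N)) (μ : {q // q ∈ Q} → Bool) :
    Matrix (Fin N → Fin 2) (Fin N → Fin 2) ℂ :=
  (Q.attach.toList.map fun q => (2⁻¹ : ℂ) • (1 + sgn (μ q) • Zq N q.1)).prod

/-- The product `∏_{q∈K} Z_q` of the commuting matrices `Z_q`, `q ∈ K`, taken
in the canonical order provided by `Finset.toList`. -/
noncomputable def ZProd (N : ℕ) (K : Finset (Fin N)) :
    Matrix (Fin N → Fin 2) (Fin N → Fin 2) ℂ :=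
  (K.toList.map (Zq N)).prod

/-- The eigenvalue of `Z` on the computational basis vector `a`. -/
def zSign (a : Fin 2) : ℂ := if a = 0 then 1 else -1

lemma Zq_eq_diagonal (N : ℕ) (q : Fin N) :
    Zq N q = Matrix.diagonal fun i => zSign (i q) := by
  have hPZ : ∀ a b, PZ a b = if a = b then zSign a else 0 := by
    intro a b
    fin_cases a <;> fin_cases b <;> simp [PZ, zSign]
  ext i j
  simp only [Zq, tensorFun, Matrix.of_apply, Matrix.diagonal_apply]
  split_ifs with h
  · subst h
    rw [Finset.prod_eq_single q]
    · simp [hPZ]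
    · intro p _ hp
      simp [hp]
    · simp
  · obtain ⟨p, hp⟩ := Function.ne_iff.mp h
    apply Finset.prod_eq_zero (Finset.mem_univ p)
    split_ifs
    · simp [hPZ, hp]
    · simp [Matrix.one_apply, hp]

lemma prod_map_diagonal {n ι : Type*} [Fintype n] [DecidableEq n] (l : List ι)
    (d : ι → n → ℂ) :
    (l.map fun q => Matrix.diagonal (d q)).prod =
      Matrix.diagonal fun i => (l.map fun q => d q i).prod := by
  induction l with
  | nil => simp
  | cons a l ih => simp [ih]

lemma ZProd_eq_diagonal (N : ℕ) (K : Finset (Fin N)) :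
    ZProd N K = Matrix.diagonal fun i => ∏ q ∈ K, zSign (i q) := by
  have h : Zq N = fun q => Matrix.diagonal fun i => zSign (i q) :=
    funext (Zq_eq_diagonal N)
  rw [ZProd, h, prod_map_diagonal]
  simp only [Finset.prod_map_toList]

lemma Eproj_eq_diagonal (N : ℕ) (Q : Finset (Fin N)) (μ : {q // q ∈ Q} → Bool) :
    Eproj N Q μ =
      Matrix.diagonal fun i => ∏ q, (2⁻¹ : ℂ) * (1 + sgn (μ q) * zSign (i q.1)) := by
  have h : (fun q : {q // q ∈ Q} => (2⁻¹ : ℂ) • (1 + sgn (μ q) • Zq N q.1)) =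
      fun q => Matrix.diagonal fun i => (2⁻¹ : ℂ) * (1 + sgn (μ q) * zSign (i q.1)) := by
    funext q
    rw [Zq_eq_diagonal, ← Matrix.diagonal_one, ← Matrix.diagonal_smul, Matrix.diagonal_add,
      ← Matrix.diagonal_smul]
    rfl
  rw [Eproj, h, prod_map_diagonal]
  simp only [Finset.prod_map_toList, Finset.univ_eq_attach]

lemma commute_Eproj {N : ℕ} {Q : Finset (Fin N)}
    {S : Matrix (Fin N → Fin 2) (Fin N → Fin 2) ℂ}
    (hS : ∀ q ∈ Q, S * Zq N q = Zq N q * S) (μ : {q // q ∈ Q} → Bool) :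
    Commute S (Eproj N Q μ) := by
  apply Commute.list_prod_right
  intro x hx
  obtain ⟨q, -, rfl⟩ := List.mem_map.mp hx
  have hq : Commute S (Zq N q.1) := hS q.1 q.2
  exact ((Commute.one_right S).add_right (hq.smul_right _)).smul_right _

/-- The spectral decomposition of `∏_{q∈R} Z_q` along the projectors `E_μ`. On a basis vector it
is a sum of products over `Q → {1,−1}`, which factors into one two-term sum for each `q ∈ Q`. -/
lemma sum_sign_smul_Eproj_sq {N : ℕ} {Q R : Finset (Fin N)} (hR : R ⊆ Q) :
    ∑ μ : {q // q ∈ Q} → Bool,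
        (∏ q ∈ Q.attach, if (q : Fin N) ∈ R then sgn (μ q) else 1) •
          (Eproj N Q μ * Eproj N Q μ) = ZProd N R := by
  simp only [Eproj_eq_diagonal, ZProd_eq_diagonal, Matrix.diagonal_mul_diagonal,
    ← Matrix.diagonal_smul]
  ext i j
  rw [Matrix.sum_apply]
  by_cases hij : i = j
  · subst hij
    simp only [Matrix.diagonal_apply_eq, Pi.smul_apply, smul_eq_mul, ← Finset.univ_eq_attach,
      ← Finset.prod_mul_distrib]
    rw [← Fintype.prod_sum fun (q : {q // q ∈ Q}) (b : Bool) =>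
      (if (q : Fin N) ∈ R then sgn b else 1) *
        ((2⁻¹ : ℂ) * (1 + sgn b * zSign (i q.1)) * (2⁻¹ * (1 + sgn b * zSign (i q.1))))]
    have hfac : ∀ q : {q // q ∈ Q}, ∑ b : Bool, (if (q : Fin N) ∈ R then sgn b else 1) *
        ((2⁻¹ : ℂ) * (1 + sgn b * zSign (i q.1)) * (2⁻¹ * (1 + sgn b * zSign (i q.1)))) =
        if (q : Fin N) ∈ R then zSign (i q.1) else 1 := by
      intro q
      by_cases hq : (q : Fin N) ∈ R <;> by_cases h0 : i q.1 = 0 <;>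
        simp [hq, h0, sgn, zSign] <;> norm_num
    simp only [hfac]
    rw [Finset.univ_eq_attach,
      Finset.prod_attach Q fun q => if q ∈ R then zSign (i q) else 1,
      Finset.prod_ite_mem, Finset.inter_eq_right.mpr hR]
  · simp [hij]

/-- for `S` commuting with every `Z_q`, `q ∈ Q`, and `R ⊆ Q`,
`Σ_μ (∏_{q∈R} μ(q)) Tr(S E_μ ρ E_μ) = Tr(S (∏_{q∈R} Z_q) ρ)` for every `ρ`. -/
theorem measurement_average (N : ℕ) (hN : 1 ≤ N)
    (Q R : Finset (Fin N)) (hR : R ⊆ Q)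
    (S : Matrix (Fin N → Fin 2) (Fin N → Fin 2) ℂ)
    (hS : ∀ q ∈ Q, S * Zq N q = Zq N q * S)
    (ρ : Matrix (Fin N → Fin 2) (Fin N → Fin 2) ℂ) :
    ∑ μ : {q // q ∈ Q} → Bool,
        (∏ q ∈ Q.attach, if (q : Fin N) ∈ R then sgn (μ q) else 1) *
          (S * Eproj N Q μ * ρ * Eproj N Q μ).trace
      = (S * ZProd N R * ρ).trace := by
  have hterm : ∀ μ : {q // q ∈ Q} → Bool,
      (S * Eproj N Q μ * ρ * Eproj N Q μ).trace =
        (S * (Eproj N Q μ * Eproj N Q μ) * ρ).trace := by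
    intro μ
    rw [Matrix.trace_mul_comm, ← mul_assoc, ← mul_assoc, ← (commute_Eproj hS μ).eq,
      mul_assoc S]
  simp only [hterm]
  rw [← sum_sign_smul_Eproj_sq hR, Finset.mul_sum, Finset.sum_mul, Matrix.trace_sum]
  simp only [Matrix.mul_smul, Matrix.smul_mul, Matrix.trace_smul, smul_eq_mul]

end
end
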